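/- arXiv:1709.05322 — 2 statements merged into one kernel-verified Lean document; each statement's English description precedes it below -/
import Mathlib

section
/- Let (a_k)_{k≥1} be a complex sequence. Then the following are equivalent: (i) sup_n (1/n)∑_{k=1}^n |a_k| < ∞; (ii) for every complex sequence (b_n) with b_n → 0 one has (1/n)∑_{k=1}^n |a_k b_k| → 0; (iii) for every complex sequence (b_n) with b_n → 0 the sequence ((1/n)∑_{k=1}^n a_k b_k)_n is bounded; (iv) for every bounded complex sequence (b_n) the sequence ((1/n)∑_{k=1}^n a_k b_k)_n is bounded. -/
open Filter Finset

lemma aux_shift {M : Type*} [AddCommMonoid M] (f : ℕ → M) (n : ℕ) :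
    ∑ k ∈ Icc 1 n, f k = ∑ i ∈ range n, f (i + 1) := by
  induction n with
  | zero => simp
  | succ n ih => rw [Finset.sum_Icc_succ_top (by omega), ih, Finset.sum_range_succ]

lemma aux12 (a : ℕ → ℂ) (s : ℝ) (hs : ∀ n : ℕ, (n : ℝ)⁻¹ * ∑ k ∈ Icc 1 n, ‖a k‖ ≤ s)
    (b : ℕ → ℂ) (hb : Tendsto b atTop (nhds 0)) :
    Tendsto (fun n : ℕ => (n : ℝ)⁻¹ * ∑ k ∈ Icc 1 n, ‖a k * b k‖) atTop (nhds 0) := by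
  have hb1 : Tendsto (fun i => b (i + 1)) atTop (nhds 0) := hb.comp (tendsto_add_atTop_nat 1)
  have h1 : (fun i => ‖a (i + 1) * b (i + 1)‖) =o[atTop] (fun i => ‖a (i + 1)‖ + 1) := by
    rw [Asymptotics.isLittleO_iff]
    intro c hc
    filter_upwards [(tendsto_zero_iff_norm_tendsto_zero.1 hb1).eventually (gt_mem_nhds hc)]
      with i hi
    rw [norm_norm, norm_mul, Real.norm_of_nonneg (by positivity)]
    nlinarith [norm_nonneg (a (i + 1)), norm_nonneg (b (i + 1))]
  have h2 : Tendsto (fun n => ∑ i ∈ range n, (‖a (i + 1)‖ + 1)) atTop atTop := by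
    refine tendsto_atTop_mono (fun n => ?_) tendsto_natCast_atTop_atTop
    rw [Finset.sum_add_distrib]
    simp
    positivity
  have h3 := h1.sum_range (fun i => by positivity) h2
  have h4 : (fun n => ∑ i ∈ range n, (‖a (i + 1)‖ + 1)) =O[atTop] (fun n : ℕ => (n : ℝ)) := by
    refine Asymptotics.IsBigO.of_bound (s + 1) ?_
    filter_upwards [eventually_gt_atTop 0] with n hn
    have hn' : (0 : ℝ) < n := by exact_mod_cast hn
    have h := hs n
    rw [aux_shift, inv_mul_le_iff₀ hn'] at h
    rw [Real.norm_of_nonneg (by positivity), Real.norm_of_nonneg hn'.le, Finset.sum_add_distrib]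
    simp
    linarith
  have h5 := (h3.trans_isBigO h4).tendsto_div_nhds_zero
  refine h5.congr (fun n => ?_)
  rw [aux_shift, div_eq_inv_mul]

lemma aux31 (a : ℕ → ℂ) (h : ∀ b : ℕ → ℂ, Tendsto b atTop (nhds 0) →
         ∃ C : ℝ, ∀ n : ℕ, ‖(n : ℂ)⁻¹ * ∑ k ∈ Icc 1 n, a k * b k‖ ≤ C) :
    ∃ s : ℝ, ∀ n : ℕ, (n : ℝ)⁻¹ * ∑ k ∈ Icc 1 n, ‖a k‖ ≤ s := by
  by_contra! hcon
  set S : ℕ → ℝ := fun n => (n : ℝ)⁻¹ * ∑ k ∈ Icc 1 n, ‖a k‖ with hS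
  set P : ℕ → ℝ := fun n => partialSups S n with hP
  have hS0 : ∀ n, 0 ≤ S n := fun n => by simp only [hS]; positivity
  have hSP : ∀ n, S n ≤ P n := fun n => le_partialSups S n
  have hP0 : ∀ n, 0 ≤ P n := fun n => (hS0 n).trans (hSP n)
  have hPm : Monotone P := (partialSups S).monotone
  have hPt : Tendsto P atTop atTop := by
    refine tendsto_atTop_atTop_of_monotone hPm (fun x => ?_)
    obtain ⟨n, hn⟩ := hcon x
    exact ⟨n, hn.le.trans (hSP n)⟩
  set r : ℕ → ℝ := fun n => Real.sqrt (1 + P n) with hr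
  have hr0 : ∀ n, 0 < r n := fun n => Real.sqrt_pos.2 (by linarith [hP0 n])
  have hrm : Monotone r := fun m n hmn => Real.sqrt_le_sqrt (by linarith [hPm hmn])
  have hrt : Tendsto r atTop atTop :=
    Real.tendsto_sqrt_atTop.comp (tendsto_atTop_add_const_left _ 1 hPt)
  obtain ⟨C, hC⟩ := h (fun k => (‖a k‖ : ℂ) / a k * ((r k)⁻¹ : ℝ)) (by
    refine squeeze_zero_norm (fun k => ?_) hrt.inv_tendsto_atTop
    rw [norm_mul, norm_div, Complex.norm_real, Complex.norm_real, norm_norm,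
      Real.norm_of_nonneg (inv_nonneg.2 (hr0 k).le)]
    exact mul_le_of_le_one_left (inv_nonneg.2 (hr0 k).le) (div_self_le_one _))
  have hC0 : 0 ≤ C := (norm_nonneg _).trans (hC 0)
  have key : ∀ n, S n ≤ C * r n := by
    intro n
    have h1 := hC n
    have h2 : (n : ℂ)⁻¹ * ∑ k ∈ Icc 1 n, a k * ((‖a k‖ : ℂ) / a k * ((r k)⁻¹ : ℝ))
        = (((n : ℝ)⁻¹ * ∑ k ∈ Icc 1 n, ‖a k‖ * (r k)⁻¹ : ℝ) : ℂ) := by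
      push_cast
      congr 1
      refine Finset.sum_congr rfl (fun k _ => ?_)
      by_cases hk : a k = 0
      · simp [hk]
      · rw [← mul_assoc, mul_div_cancel₀ _ hk]
    have hnn : 0 ≤ (n : ℝ)⁻¹ * ∑ k ∈ Icc 1 n, ‖a k‖ * (r k)⁻¹ :=
      mul_nonneg (by positivity) (Finset.sum_nonneg fun k _ =>
        mul_nonneg (norm_nonneg _) (inv_nonneg.2 (hr0 k).le))
    rw [h2, Complex.norm_real, Real.norm_of_nonneg hnn] at h1
    rw [← div_le_iff₀ (hr0 n)]
    refine le_trans ?_ h1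
    simp only [hS]
    rw [div_eq_mul_inv, mul_assoc, Finset.sum_mul]
    refine mul_le_mul_of_nonneg_left (Finset.sum_le_sum fun k hk => ?_) (by positivity)
    exact mul_le_mul_of_nonneg_left
      (inv_anti₀ (hr0 k) (hrm (Finset.mem_Icc.1 hk).2)) (norm_nonneg _)
  have key2 : ∀ n, P n ≤ C * r n := fun n =>
    partialSups_le S n _ (fun m hm => (key m).trans (mul_le_mul_of_nonneg_left (hrm hm) hC0))
  obtain ⟨n, hn⟩ := (hrt.eventually_gt_atTop (C + 1)).exists
  have h1 := key2 n
  have h2 : r n ^ 2 = 1 + P n := Real.sq_sqrt (by linarith [hP0 n])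
  nlinarith

/-- For a complex sequence `(a_k)`, the following are equivalent:
(i) `sup_n (1/n) ∑_{k=1}^n |a_k| < ∞`;
(ii) for every sequence `b_n → 0`, `(1/n) ∑_{k=1}^n |a_k b_k| → 0`;
(iii) for every sequence `b_n → 0`, the sequence `((1/n) ∑_{k=1}^n a_k b_k)_n` is bounded;
(iv) for every bounded sequence `(b_n)`, the sequence `((1/n) ∑_{k=1}^n a_k b_k)_n` is
bounded. -/
theorem stmt3 (a : ℕ → ℂ) :
    List.TFAE
      [∃ s : ℝ, ∀ n : ℕ, (n : ℝ)⁻¹ * ∑ k ∈ Icc 1 n, ‖a k‖ ≤ s,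
       ∀ b : ℕ → ℂ, Tendsto b atTop (nhds 0) →
         Tendsto (fun n : ℕ => (n : ℝ)⁻¹ * ∑ k ∈ Icc 1 n, ‖a k * b k‖) atTop (nhds 0),
       ∀ b : ℕ → ℂ, Tendsto b atTop (nhds 0) →
         ∃ C : ℝ, ∀ n : ℕ, ‖(n : ℂ)⁻¹ * ∑ k ∈ Icc 1 n, a k * b k‖ ≤ C,
       ∀ b : ℕ → ℂ, (∃ D : ℝ, ∀ k, ‖b k‖ ≤ D) →
         ∃ C : ℝ, ∀ n : ℕ, ‖(n : ℂ)⁻¹ * ∑ k ∈ Icc 1 n, a k * b k‖ ≤ C] := by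
  tfae_have 1 → 2 := fun ⟨s, hs⟩ b hb => aux12 a s hs b hb
  tfae_have 2 → 3 := by
    intro h b hb
    obtain ⟨C, hC⟩ := (h b hb).bddAbove_range
    refine ⟨C, fun n => le_trans ?_ (hC ⟨n, rfl⟩)⟩
    rw [norm_mul, norm_inv, Complex.norm_natCast]
    exact mul_le_mul_of_nonneg_left (norm_sum_le _ _) (by positivity)
  tfae_have 3 → 1 := aux31 a
  tfae_have 1 → 4 := by
    rintro ⟨s, hs⟩ b ⟨D, hD⟩
    have hD0 : 0 ≤ D := (norm_nonneg _).trans (hD 0)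
    refine ⟨s * D, fun n => ?_⟩
    rw [norm_mul, norm_inv, Complex.norm_natCast]
    refine le_trans ?_ (mul_le_mul_of_nonneg_right (hs n) hD0)
    rw [mul_assoc, Finset.sum_mul]
    refine mul_le_mul_of_nonneg_left (norm_sum_le_of_le _ fun k _ => ?_) (by positivity)
    rw [norm_mul]
    exact mul_le_mul_of_nonneg_left (hD k) (norm_nonneg _)
  tfae_have 4 → 3 := by
    intro h b hb
    obtain ⟨D, hD⟩ := hb.norm.bddAbove_range
    exact h b ⟨D, fun k => hD ⟨k, rfl⟩⟩
  tfae_finish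
end

section
/- Let (a_k)_{k≥1} be a sequence of scalars satisfying sup_n (1/n)∑_{k=1}^n |a_k| < ∞, and suppose c(1) := lim_n (1/n)∑_{k=1}^n a_k exists. Let T be a contraction on a (real or complex) Hilbert space H whose powers T^n converge in the weak operator topology to an operator P. Then for every x ∈ H, lim_n ‖(1/n)∑_{k=1}^n a_k T^k x − c(1)·P x‖ = 0. -/
open Filter Finset

lemma aux_contr {𝕜 : Type*} [RCLike 𝕜] {H : Type*} [NormedAddCommGroup H]
    [InnerProductSpace 𝕜 H] [CompleteSpace H] (S : H →L[𝕜] H) (hS : ‖S‖ ≤ 1) (u v : H) :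
    ‖(inner 𝕜 u v : 𝕜) - inner 𝕜 (S u) (S v)‖ ≤ ‖u‖ * Real.sqrt (‖v‖ ^ 2 - ‖S v‖ ^ 2) := by
  set w := ContinuousLinearMap.adjoint S (S v) with hw
  have h1 : (inner 𝕜 u v : 𝕜) - inner 𝕜 (S u) (S v) = inner 𝕜 u (v - w) := by
    rw [inner_sub_right, hw, ContinuousLinearMap.adjoint_inner_right]
  rw [h1]
  refine (norm_inner_le_norm _ _).trans ?_
  gcongr
  apply Real.le_sqrt_of_sq_le
  rw [@norm_sub_sq 𝕜, hw, ContinuousLinearMap.adjoint_inner_right, ← hw]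
  have h2 : RCLike.re (inner 𝕜 (S v) (S v) : 𝕜) = ‖S v‖ ^ 2 := (norm_sq_eq_re_inner _).symm
  have h3 : ‖w‖ ≤ ‖S v‖ := by
    refine (ContinuousLinearMap.le_of_opNorm_le _ (c := 1) ?_ _).trans (by simp)
    simpa using hS
  have h4 : ‖w‖ ^ 2 ≤ ‖S v‖ ^ 2 := by gcongr
  rw [h2]; linarith

lemma aux_pow {𝕜 : Type*} [RCLike 𝕜] {H : Type*} [NormedAddCommGroup H]
    [InnerProductSpace 𝕜 H] (T : H →L[𝕜] H) (hT : ‖T‖ ≤ 1) (n : ℕ) : ‖T ^ n‖ ≤ 1 := by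
  induction n with
  | zero => rw [pow_zero]; exact ContinuousLinearMap.norm_id_le
  | succ n ih =>
    rw [pow_succ]
    exact (norm_mul_le _ _).trans (mul_le_one₀ ih (norm_nonneg _) hT)

lemma aux_unif {𝕜 : Type*} [RCLike 𝕜] {H : Type*} [NormedAddCommGroup H]
    [InnerProductSpace 𝕜 H] [CompleteSpace H] (T : H →L[𝕜] H) (hT : ‖T‖ ≤ 1) (y : H)
    (hy : ∀ z : H, Tendsto (fun n : ℕ => (inner 𝕜 ((T ^ n) y) z : 𝕜)) atTop (nhds 0))
    (ε : ℝ) (hε : 0 < ε) :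
    ∃ M : ℕ, ∀ m, M ≤ m → ∀ k, ‖(inner 𝕜 ((T ^ (k + m)) y) ((T ^ k) y) : 𝕜)‖ ≤ ε := by
  have hle : ∀ n z, ‖(T ^ n) z‖ ≤ ‖z‖ := fun n z =>
    (ContinuousLinearMap.le_of_opNorm_le _ (aux_pow T hT n) z).trans (by simp)
  -- norms squared decrease
  have hanti : Antitone (fun n : ℕ => ‖(T ^ n) y‖ ^ 2) := by
    intro m n hmn
    obtain ⟨d, rfl⟩ := Nat.exists_eq_add_of_le hmn
    have := hle d ((T ^ m) y)
    rw [← ContinuousLinearMap.mul_apply, ← pow_add, add_comm d m] at this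
    dsimp only
    gcongr
  have hconv := tendsto_atTop_ciInf hanti ⟨0, by rintro _ ⟨n, rfl⟩; positivity⟩
  have hinf : ∀ k, (⨅ n, ‖(T ^ n) y‖ ^ 2) ≤ ‖(T ^ k) y‖ ^ 2 := fun k =>
    ciInf_le ⟨0, by rintro _ ⟨n, rfl⟩; positivity⟩ k
  set L := ⨅ n, ‖(T ^ n) y‖ ^ 2
  have hlim : Tendsto (fun n : ℕ => ‖y‖ * Real.sqrt (‖(T ^ n) y‖ ^ 2 - L)) atTop (nhds 0) := by
    have := ((hconv.sub_const L).sqrt).const_mul ‖y‖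
    simpa using this
  obtain ⟨N, hN⟩ := (hlim.eventually (gt_mem_nhds (half_pos hε))).exists
  have hk : ∀ k, ∀ᶠ m in atTop, ‖(inner 𝕜 ((T ^ (k + m)) y) ((T ^ k) y) : 𝕜)‖ ≤ ε / 2 := by
    intro k
    have h1 : Tendsto (fun m : ℕ => ‖(inner 𝕜 ((T ^ (k + m)) y) ((T ^ k) y) : 𝕜)‖) atTop
        (nhds 0) := by
      have h := (hy ((T ^ k) y)).comp (tendsto_add_atTop_nat k)
      have := h.norm
      simpa [Function.comp_def, add_comm] using this
    exact (h1.eventually (gt_mem_nhds (half_pos hε))).mono fun _ h => h.le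
  have hall : ∀ᶠ m in atTop, ∀ k ∈ Finset.range (N + 1),
      ‖(inner 𝕜 ((T ^ (k + m)) y) ((T ^ k) y) : 𝕜)‖ ≤ ε / 2 :=
    (Finset.eventually_all _).2 fun k _ => hk k
  obtain ⟨M, hM⟩ := eventually_atTop.1 hall
  refine ⟨M, fun m hm k => ?_⟩
  rcases le_or_gt k N with hkN | hkN
  · exact (hM m hm k (by simp; omega)).trans (by linarith)
  · obtain ⟨d, rfl⟩ := Nat.exists_eq_add_of_le hkN.le
    have h0 := hM m hm N (by simp)
    have h1 := aux_contr (T ^ d) (aux_pow T hT d) ((T ^ (N + m)) y) ((T ^ N) y)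
    simp only [← ContinuousLinearMap.mul_apply, ← pow_add] at h1
    rw [show d + (N + m) = N + d + m by ring, add_comm d N] at h1
    have h2 : ‖(T ^ (N + m)) y‖ * Real.sqrt (‖(T ^ N) y‖ ^ 2 - ‖(T ^ (N + d)) y‖ ^ 2)
        ≤ ‖y‖ * Real.sqrt (‖(T ^ N) y‖ ^ 2 - L) := by
      gcongr
      · exact hle _ _
      · exact hinf _
    have h3 := norm_sub_norm_le (inner 𝕜 ((T ^ (N + d + m)) y) ((T ^ (N + d)) y) : 𝕜)
      (inner 𝕜 ((T ^ (N + m)) y) ((T ^ N) y))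
    rw [norm_sub_rev] at h3
    linarith

lemma aux_small {𝕜 : Type*} [RCLike 𝕜] (a : ℕ → 𝕜) (c : 𝕜)
    (hc : Tendsto (fun n : ℕ => (n : 𝕜)⁻¹ * ∑ k ∈ Icc 1 n, a k) atTop (nhds c))
    (δ : ℝ) (hδ : 0 < δ) :
    ∀ᶠ n : ℕ in atTop, ∀ k ∈ Icc 1 n, ‖a k‖ ≤ δ * n := by
  have h1 : Tendsto (fun n : ℕ => ((n + 1 : ℕ) : 𝕜)⁻¹ * a (n + 1)) atTop (nhds 0) := by
    have h2 := hc.comp (tendsto_add_atTop_nat 1)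
    have h3 : Tendsto (fun n : ℕ => (n : 𝕜) / (n + 1)) atTop (nhds 1) :=
      tendsto_natCast_div_add_atTop (1 : 𝕜)
    have h4 := h2.sub (h3.mul hc)
    rw [one_mul, sub_self] at h4
    refine h4.congr fun n => ?_
    simp only [Function.comp]
    rw [Finset.sum_Icc_succ_top (by omega)]
    have hn : ((n : 𝕜) + 1) ≠ 0 := by exact_mod_cast Nat.succ_ne_zero n
    push_cast
    rcases eq_or_ne n 0 with rfl | h
    · simp
    · have : (n : 𝕜) ≠ 0 := by exact_mod_cast h
      field_simp
      ring
  have h5 := h1.norm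
  rw [norm_zero] at h5
  obtain ⟨K, hK⟩ := eventually_atTop.1 (h5.eventually (gt_mem_nhds hδ))
  have h6 : ∀ k, K + 1 ≤ k → ‖a k‖ ≤ δ * k := by
    intro k hk
    obtain ⟨j, rfl⟩ : ∃ j, k = j + 1 := ⟨k - 1, by omega⟩
    have := hK j (by omega)
    rw [norm_mul, norm_inv, RCLike.norm_natCast, inv_mul_lt_iff₀ (by positivity)] at this
    linarith
  have h7 : ∀ᶠ n : ℕ in atTop, ∑ k ∈ range (K + 1), ‖a k‖ ≤ δ * n :=
    (tendsto_natCast_atTop_atTop.const_mul_atTop hδ).eventually_ge_atTop _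
  filter_upwards [h7] with n hn k hk
  rw [mem_Icc] at hk
  rcases le_or_gt (K + 1) k with h | h
  · refine (h6 k h).trans ?_
    have : (k : ℝ) ≤ n := by exact_mod_cast hk.2
    gcongr
  · exact (Finset.single_le_sum (f := fun k => ‖a k‖) (fun i _ => norm_nonneg _)
      (by simpa using h)).trans hn

lemma aux_main {𝕜 : Type*} [RCLike 𝕜] {H : Type*} [NormedAddCommGroup H]
    [InnerProductSpace 𝕜 H] [CompleteSpace H]
    (a : ℕ → 𝕜)
    (ha_bdd : ∃ C : ℝ, ∀ n : ℕ, (n : ℝ)⁻¹ * ∑ k ∈ Icc 1 n, ‖a k‖ ≤ C)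
    (c : 𝕜) (hc : Tendsto (fun n : ℕ => (n : 𝕜)⁻¹ * ∑ k ∈ Icc 1 n, a k) atTop (nhds c))
    (T : H →L[𝕜] H) (hT : ‖T‖ ≤ 1) (y : H)
    (hy : ∀ z : H, Tendsto (fun n : ℕ => (inner 𝕜 ((T ^ n) y) z : 𝕜)) atTop (nhds 0)) :
    Tendsto (fun n : ℕ => (n : 𝕜)⁻¹ • ∑ k ∈ Icc 1 n, a k • (T ^ k) y) atTop (nhds 0) := by
  have hle : ∀ n z, ‖(T ^ n) z‖ ≤ ‖z‖ := fun n z =>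
    (ContinuousLinearMap.le_of_opNorm_le _ (aux_pow T hT n) z).trans (by simp)
  obtain ⟨C, hC⟩ := ha_bdd
  have hC0 : 0 ≤ C := by simpa using hC 0
  rw [Metric.tendsto_atTop']
  intro η hη
  -- choose parameters
  set ε : ℝ := η ^ 2 / (4 * (C ^ 2 + 1)) with hεd
  have hε : 0 < ε := by positivity
  obtain ⟨M, hM⟩ := aux_unif T hT y hy ε hε
  set δ : ℝ := η ^ 2 / (4 * (‖y‖ ^ 2 * C * (2 * M + 1) + 1)) with hδd
  have hδ : 0 < δ := by positivity
  obtain ⟨N, hN⟩ := eventually_atTop.1 (aux_small a c hc δ hδ)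
  refine ⟨N, fun n hn => ?_⟩
  have hn0 : 0 < (n : ℝ) := by exact_mod_cast (by omega : 0 < n)
  have hs := hN n hn.le
  have hA := hC n
  rw [inv_mul_le_iff₀ hn0] at hA
  set A := ∑ k ∈ Icc 1 n, ‖a k‖ with hAd
  have hA0 : 0 ≤ A := Finset.sum_nonneg fun _ _ => norm_nonneg _
  have hpair : ∀ j k : ℕ, ‖(inner 𝕜 ((T ^ j) y) ((T ^ k) y) : 𝕜)‖ ≤
      ε + if k ∈ Icc (j - M) (j + M) then ‖y‖ ^ 2 else 0 := by
    intro j k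
    split_ifs with h
    · have h1 := norm_inner_le_norm (𝕜 := 𝕜) ((T ^ j) y) ((T ^ k) y)
      have h2 : ‖(T ^ j) y‖ * ‖(T ^ k) y‖ ≤ ‖y‖ * ‖y‖ := by
        gcongr <;> exact hle _ _
      nlinarith
    · rw [add_zero]
      rw [mem_Icc, not_and_or] at h
      rcases le_total j k with hjk | hjk
      · obtain ⟨d, rfl⟩ := Nat.exists_eq_add_of_le hjk
        rw [norm_inner_symm]
        exact hM d (by omega) j
      · obtain ⟨d, rfl⟩ := Nat.exists_eq_add_of_le hjk
        exact hM d (by omega) k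
  have hrow : ∀ j : ℕ, ∑ k ∈ Icc 1 n, ‖a k‖ * (if k ∈ Icc (j - M) (j + M) then ‖y‖ ^ 2 else 0)
      ≤ (2 * M + 1) * (δ * n * ‖y‖ ^ 2) := by
    intro j
    have h1 : ∀ k ∈ Icc 1 n, ‖a k‖ * (if k ∈ Icc (j - M) (j + M) then ‖y‖ ^ 2 else 0) ≤
        if k ∈ Icc (j - M) (j + M) then δ * n * ‖y‖ ^ 2 else 0 := by
      intro k hk
      have := hs k hk
      split_ifs
      · gcongr
      · simp
    refine (Finset.sum_le_sum h1).trans ?_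
    rw [← Finset.sum_filter, Finset.sum_const, nsmul_eq_mul]
    gcongr
    have h2 : #{k ∈ Icc 1 n | k ∈ Icc (j - M) (j + M)} ≤ 2 * M + 1 := by
      refine (Finset.card_le_card (t := Icc (j - M) (j + M)) ?_).trans ?_
      · intro k hk
        exact (mem_filter.1 hk).2
      · rw [Nat.card_Icc]; omega
    exact_mod_cast h2
  set V := ∑ k ∈ Icc 1 n, a k • (T ^ k) y with hV
  have hV2 : ‖V‖ ^ 2 ≤ ε * A ^ 2 + A * ((2 * M + 1) * (δ * n * ‖y‖ ^ 2)) := by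
    have h1 : ‖V‖ ^ 2 = ‖(inner 𝕜 V V : 𝕜)‖ := by
      rw [inner_self_eq_norm_sq_to_K]; simp
    have h2 : (inner 𝕜 V V : 𝕜) = ∑ j ∈ Icc 1 n, ∑ k ∈ Icc 1 n,
        inner 𝕜 (a j • (T ^ j) y) (a k • (T ^ k) y) := by
      rw [hV, sum_inner]
      simp_rw [inner_sum]
    rw [h1, h2]
    calc _ ≤ ∑ j ∈ Icc 1 n, ∑ k ∈ Icc 1 n,
          ‖(inner 𝕜 (a j • (T ^ j) y) (a k • (T ^ k) y) : 𝕜)‖ :=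
          (norm_sum_le _ _).trans (Finset.sum_le_sum fun j _ => norm_sum_le _ _)
      _ ≤ ∑ j ∈ Icc 1 n, ∑ k ∈ Icc 1 n, ‖a j‖ * (‖a k‖ *
          (ε + if k ∈ Icc (j - M) (j + M) then ‖y‖ ^ 2 else 0)) := by
          refine Finset.sum_le_sum fun j _ => Finset.sum_le_sum fun k _ => ?_
          rw [inner_smul_left, inner_smul_right, norm_mul, norm_mul, RCLike.norm_conj]
          gcongr
          exact hpair j k
      _ ≤ ∑ j ∈ Icc 1 n, ‖a j‖ * (A * ε + (2 * M + 1) * (δ * n * ‖y‖ ^ 2)) := by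
          refine Finset.sum_le_sum fun j _ => ?_
          rw [← Finset.mul_sum]
          gcongr
          simp_rw [mul_add]
          rw [Finset.sum_add_distrib, ← Finset.sum_mul]
          gcongr
          exact (hrow j).trans_eq (by ring)
      _ = _ := by
          rw [← Finset.sum_mul]; ring
  have hV3 : ‖V‖ ^ 2 < (n * η) ^ 2 := by
    have e1 : ε * A ^ 2 ≤ n ^ 2 * (ε * C ^ 2) := by
      have : A ^ 2 ≤ (n * C) ^ 2 := by gcongr
      calc _ ≤ ε * (n * C) ^ 2 := by gcongr
        _ = _ := by ring
    have e2 : A * ((2 * M + 1) * (δ * n * ‖y‖ ^ 2)) ≤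
        n ^ 2 * (δ * (‖y‖ ^ 2 * C * (2 * M + 1))) := by
      calc _ ≤ (n * C) * ((2 * M + 1) * (δ * n * ‖y‖ ^ 2)) := by gcongr
        _ = _ := by ring
    have e3 : ε * C ^ 2 ≤ η ^ 2 / 4 := by
      have : ε * (C ^ 2 + 1) = η ^ 2 / 4 := by rw [hεd]; field_simp
      linarith
    have e4 : δ * (‖y‖ ^ 2 * C * (2 * M + 1)) ≤ η ^ 2 / 4 := by
      have h0 : ‖y‖ ^ 2 * C * (2 * M + 1) + 1 ≠ 0 := by positivity
      have : δ * (‖y‖ ^ 2 * C * (2 * M + 1) + 1) = η ^ 2 / 4 := by rw [hδd]; field_simp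
      linarith
    have e5 : (n : ℝ) ^ 2 * (ε * C ^ 2) ≤ n ^ 2 * (η ^ 2 / 4) := by gcongr
    have e6 : (n : ℝ) ^ 2 * (δ * (‖y‖ ^ 2 * C * (2 * M + 1))) ≤ n ^ 2 * (η ^ 2 / 4) := by gcongr
    have e7 : 0 < (n : ℝ) ^ 2 * η ^ 2 := by positivity
    rw [mul_pow]
    linarith
  have hV4 : ‖V‖ < n * η := lt_of_pow_lt_pow_left₀ 2 (by positivity) hV3
  rw [dist_zero_right, norm_smul, norm_inv, RCLike.norm_natCast, inv_mul_lt_iff₀ hn0]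
  exact hV4

/-- Let `(a_k)` be scalars with `sup_n (1/n) ∑_{k=1}^n |a_k| < ∞` such that
`c(1) := lim_n (1/n) ∑_{k=1}^n a_k` exists. Let `T` be a contraction on a (real or complex)
Hilbert space `H` whose powers converge in the weak operator topology to `P`. Then for every
`x ∈ H`, `lim_n ‖(1/n) ∑_{k=1}^n a_k T^k x − c(1) P x‖ = 0`. -/
theorem stmt6 {𝕜 : Type*} [RCLike 𝕜] {H : Type*} [NormedAddCommGroup H]
    [InnerProductSpace 𝕜 H] [CompleteSpace H]
    (a : ℕ → 𝕜)
    (ha_bdd : ∃ C : ℝ, ∀ n : ℕ, (n : ℝ)⁻¹ * ∑ k ∈ Icc 1 n, ‖a k‖ ≤ C)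
    (c : 𝕜) (hc : Tendsto (fun n : ℕ => (n : 𝕜)⁻¹ * ∑ k ∈ Icc 1 n, a k) atTop (nhds c))
    (T : H →L[𝕜] H) (hT : ‖T‖ ≤ 1) (P : H →L[𝕜] H)
    (hP : ∀ x y : H,
      Tendsto (fun n : ℕ => (inner 𝕜 ((T ^ n) x) y : 𝕜)) atTop (nhds (inner 𝕜 (P x) y)))
    (x : H) :
    Tendsto (fun n : ℕ => ‖(n : 𝕜)⁻¹ • ∑ k ∈ Icc 1 n, a k • (T ^ k) x - c • P x‖)
      atTop (nhds 0) := by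
  have hTP : T (P x) = P x := by
    refine ext_inner_right 𝕜 fun z => ?_
    have h1 := (hP x z).comp (tendsto_add_atTop_nat 1)
    have h2 := hP x (ContinuousLinearMap.adjoint T z)
    rw [ContinuousLinearMap.adjoint_inner_right] at h2
    refine tendsto_nhds_unique (h2.congr fun n => ?_) h1
    rw [ContinuousLinearMap.adjoint_inner_right, Function.comp, pow_succ',
      ContinuousLinearMap.mul_apply]
  have hTnP : ∀ n, (T ^ n) (P x) = P x := by
    intro n
    induction n with
    | zero => simp
    | succ n ih => rw [pow_succ, ContinuousLinearMap.mul_apply, hTP, ih]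
  have hy : ∀ z : H, Tendsto (fun n : ℕ => (inner 𝕜 ((T ^ n) (x - P x)) z : 𝕜)) atTop
      (nhds 0) := by
    intro z
    have h := (hP x z).sub_const (inner 𝕜 (P x) z)
    rw [sub_self] at h
    refine h.congr fun n => ?_
    rw [map_sub, hTnP, inner_sub_left]
  have hm := aux_main a ha_bdd c hc T hT (x - P x) hy
  have hs := (hc.sub_const c).smul_const (P x)
  have h := (hm.add hs).norm
  rw [sub_self, zero_smul, add_zero, norm_zero] at h
  refine h.congr fun n => ?_
  congr 1
  simp only [map_sub, hTnP, smul_sub, Finset.sum_sub_distrib, sub_smul, mul_smul,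
    ← Finset.sum_smul]
  abel
end
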